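/- For every integer n ≥ 0, the functions z φ_{5/2+n,1}(z) and z φ_{5/2+n,−1}(z) (that is, z𝒥_{3/2+n} and z𝓘_{3/2+n}, where 𝒥_ν = φ_{ν+1,1} and 𝓘_ν = φ_{ν+1,−1} are the normalized Bessel and modified Bessel functions of order ν) belong to the class S*_e. -/

import Mathlib

/-!
Let `φ = φ_{κ,c}`. Termwise differentiation gives `φ'_{κ,c} = -(c / 4κ) φ_{κ+1,c}`, and
`|κ + j| ≥ |κ|` for `Re κ ≥ -1/2`, so that `|(κ)_k| ≥ |κ|^k` and `|φ_{κ,c}(z)|` is at most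
`exp (|c z| / 4|κ|)`. When `|c| ≤ |κ|`, this gives `|φ'| ≤ exp (1/4) / 4 ≤ 1/3` on the unit disk.
By the mean value inequality `φ` stays so close to `φ(0) = 1` that `z φ' / φ = z (zφ)' / (zφ) - 1`
has modulus less than `1 - 1/e`. The image of the unit disk under `exp` contains the disk of this
radius around `1`, because `|log (1 + u)| ≤ -log (1 - |u|)`.
-/

open Complex Set

def unitDisk : Set ℂ := Metric.ball 0 1

def expD : Set ℂ := Complex.exp '' unitDisk

/-- The generalized and normalized Bessel function
`φ_{κ,c}(z) = ∑ ((-c/4)^n / ((κ)_n n!)) zⁿ`. -/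
noncomputable def besselPhi (κ c : ℂ) (z : ℂ) : ℂ :=
  ∑' n : ℕ, ((-c / 4) ^ n / ((ascPochhammer ℂ n).eval κ * (n.factorial : ℂ))) * z ^ n

/-- Membership in the class `S*_e` of exponential starlike functions. -/
def IsSe (f : ℂ → ℂ) : Prop :=
  AnalyticOnNhd ℂ f unitDisk ∧ f 0 = 0 ∧ deriv f 0 = 1 ∧
    ∀ z ∈ unitDisk \ {0}, f z ≠ 0 ∧ z * deriv f z / f z ∈ expD

theorem norm_log_one_add_le_neg_log_one_sub_norm {u : ℂ} (hu : ‖u‖ < 1) :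
    ‖log (1 + u)‖ ≤ -Real.log (1 - ‖u‖) := by
  have hlog : HasSum (fun k : ℕ => ‖u‖ ^ k / k) (-Real.log (1 - ‖u‖)) := by
    rw [← hasSum_nat_add_iff' 1]
    simpa using Real.hasSum_pow_div_log_of_abs_lt_one (by rwa [abs_norm])
  rw [← (hasSum_taylorSeries_log hu).tsum_eq]
  exact tsum_of_norm_bounded hlog fun k => by simp

theorem one_add_mem_expD {u : ℂ} (hu : ‖u‖ < 1 - Real.exp (-1)) : 1 + u ∈ expD := by
  have hu1 : ‖u‖ < 1 := hu.trans (sub_lt_self 1 (Real.exp_pos _))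
  refine ⟨log (1 + u), mem_ball_zero_iff.mpr ?_, exp_log ?_⟩
  · have hlog : -1 < Real.log (1 - ‖u‖) := by
      rw [Real.lt_log_iff_exp_lt (by linarith)]
      linarith
    linarith [norm_log_one_add_le_neg_log_one_sub_norm hu1]
  · exact slitPlane_ne_zero (mem_slitPlane_of_norm_lt_one hu1)

theorem one_half_le_one_sub_exp_neg_one : 1 / 2 ≤ 1 - Real.exp (-1) := by
  have hexp : Real.exp (-1) ≤ 2⁻¹ := by
    rw [Real.exp_neg]
    exact inv_anti₀ two_pos (by linarith [Real.exp_one_gt_d9])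
  linarith

theorem norm_sub_le_mul_norm_of_norm_deriv_le {g : ℂ → ℂ} {M : ℝ}
    (hg : DifferentiableOn ℂ g unitDisk) (hM : ∀ z ∈ unitDisk, ‖deriv g z‖ ≤ M)
    {z : ℂ} (hz : z ∈ unitDisk) : ‖g z - g 0‖ ≤ M * ‖z‖ := by
  simpa using (convex_ball (0 : ℂ) 1).norm_image_sub_le_of_norm_deriv_le
    (fun w hw => hg.differentiableAt (Metric.isOpen_ball.mem_nhds hw)) hM
    (Metric.mem_ball_self one_pos) hz

theorem norm_mul_deriv_lt_mul_norm {g : ℂ → ℂ} {M ρ : ℝ} (hg : DifferentiableOn ℂ g unitDisk)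
    (hg0 : g 0 = 1) (hM : ∀ z ∈ unitDisk, ‖deriv g z‖ ≤ M) (hρ : 0 < ρ) (hMρ : M ≤ ρ * (1 - M))
    {z : ℂ} (hz : z ∈ unitDisk) : ‖z * deriv g z‖ < ρ * ‖g z‖ := by
  have hz1 : ‖z‖ < 1 := mem_ball_zero_iff.mp hz
  have hlower : 1 - M * ‖z‖ ≤ ‖g z‖ := by
    have hdist := norm_sub_le_mul_norm_of_norm_deriv_le hg hM hz
    rw [hg0, norm_sub_rev] at hdist
    linarith [norm_sub_norm_le 1 (g z), norm_one (α := ℂ)]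
  calc ‖z * deriv g z‖ = ‖z‖ * ‖deriv g z‖ := norm_mul _ _
    _ ≤ ‖z‖ * M := by gcongr; exact hM z hz
    _ < ρ * (1 - M * ‖z‖) := by
        linarith [mul_le_mul_of_nonneg_left hMρ (norm_nonneg z), mul_lt_of_lt_one_right hρ hz1]
    _ ≤ ρ * ‖g z‖ := by gcongr

theorem isSe_mul_of_norm_deriv_le {g : ℂ → ℂ} {M : ℝ} (hg : DifferentiableOn ℂ g unitDisk)
    (hg0 : g 0 = 1) (hM : ∀ z ∈ unitDisk, ‖deriv g z‖ ≤ M)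
    (hMe : M ≤ (1 - Real.exp (-1)) * (1 - M)) : IsSe fun z => z * g z := by
  have hderiv : ∀ z ∈ unitDisk, deriv (fun z => z * g z) z = g z + z * deriv g z := by
    intro z hz
    have hgz := hg.differentiableAt (Metric.isOpen_ball.mem_nhds hz)
    simpa using ((hasDerivAt_id' z).fun_mul hgz.hasDerivAt).deriv
  refine ⟨(differentiableOn_id.mul hg).analyticOnNhd Metric.isOpen_ball, zero_mul _, ?_, ?_⟩
  · simp [hderiv 0 (Metric.mem_ball_self one_pos), hg0]
  · rintro z ⟨hz, hz0 : z ≠ 0⟩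
    have hρ : 0 < 1 - Real.exp (-1) := by linarith [one_half_le_one_sub_exp_neg_one]
    have hlt := norm_mul_deriv_lt_mul_norm hg hg0 hM hρ hMe hz
    have hgz : 0 < ‖g z‖ := pos_of_mul_pos_right ((norm_nonneg _).trans_lt hlt) hρ.le
    have hgz0 : g z ≠ 0 := norm_pos_iff.mp hgz
    refine ⟨mul_ne_zero hz0 hgz0, ?_⟩
    have hquot : z * deriv (fun z => z * g z) z / (z * g z) = 1 + z * deriv g z / g z := by
      rw [hderiv z hz]
      field_simp
    rw [hquot]
    apply one_add_mem_expD
    rwa [norm_div, div_lt_iff₀ hgz]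

theorem hasDerivAt_tsum_mul_pow {𝕜 : Type*} [RCLike 𝕜] {a : ℕ → 𝕜} {R : ℝ}
    (ha : Summable fun k : ℕ => (k + 1) * ‖a (k + 1)‖ * R ^ k) {z : 𝕜} (hz : ‖z‖ < R) :
    HasDerivAt (fun w => ∑' k, a k * w ^ k) (∑' k : ℕ, (k + 1) * a (k + 1) * z ^ k) z := by
  have hR : 0 < R := (norm_nonneg z).trans_lt hz
  have hbound (k : ℕ) (w : 𝕜) (hw : w ∈ Metric.ball 0 R) :
      ‖a k * (k * w ^ (k - 1))‖ ≤ k * ‖a k‖ * R ^ (k - 1) := by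
    rw [norm_mul, norm_mul, norm_pow, RCLike.norm_natCast, mul_left_comm, ← mul_assoc]
    gcongr
    exact (mem_ball_zero_iff.mp hw).le
  have hmajorant : Summable fun k : ℕ => k * ‖a k‖ * R ^ (k - 1) :=
    (summable_nat_add_iff 1).mp (by simpa using ha)
  have hderiv := hasDerivAt_tsum_of_isPreconnected hmajorant Metric.isOpen_ball
    (convex_ball (0 : 𝕜) R).isPreconnected (fun k w _ => (hasDerivAt_pow k w).const_mul (a k))
    hbound (Metric.mem_ball_self hR) (summable_of_ne_finset_zero (s := {0}) fun k hk => by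
      simp [Finset.notMem_singleton.mp hk]) (mem_ball_zero_iff.mpr hz)
  have hsummable : Summable fun k => a k * (k * z ^ (k - 1)) :=
    hmajorant.of_norm_bounded fun k => hbound k z (mem_ball_zero_iff.mpr hz)
  rw [hsummable.tsum_eq_zero_add] at hderiv
  simpa [mul_left_comm, mul_assoc] using hderiv

theorem norm_le_norm_add_natCast {κ : ℂ} (hκ : -1 / 2 ≤ κ.re) (j : ℕ) : ‖κ‖ ≤ ‖κ + j‖ := by
  rw [← sq_le_sq₀ (norm_nonneg _) (norm_nonneg _), Complex.sq_norm, Complex.sq_norm]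
  simp only [normSq_apply, add_re, add_im, natCast_re, natCast_im, add_zero]
  have hj : (j : ℝ) ≤ j * j := by exact_mod_cast Nat.le_mul_self j
  nlinarith [Nat.cast_nonneg (α := ℝ) j]

theorem norm_pow_le_norm_ascPochhammer_eval {κ : ℂ} (hκ : -1 / 2 ≤ κ.re) (k : ℕ) :
    ‖κ‖ ^ k ≤ ‖(ascPochhammer ℂ k).eval κ‖ := by
  induction k with
  | zero => simp
  | succ k ih =>
    rw [ascPochhammer_succ_eval, norm_mul, pow_succ]
    gcongr
    exact norm_le_norm_add_natCast hκ k

/-- The Taylor coefficients of `φ_{κ,c}` at the origin. -/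
noncomputable def besselCoeff (κ c : ℂ) (k : ℕ) : ℂ :=
  (-c / 4) ^ k / ((ascPochhammer ℂ k).eval κ * (k.factorial : ℂ))

theorem besselPhi_eq_tsum (κ c z : ℂ) : besselPhi κ c z = ∑' k, besselCoeff κ c k * z ^ k := rfl

theorem succ_mul_besselCoeff_succ (κ c : ℂ) (k : ℕ) :
    (k + 1) * besselCoeff κ c (k + 1) = -c / (4 * κ) * besselCoeff (κ + 1) c k := by
  have hk : (k + 1 : ℂ) ≠ 0 := k.cast_add_one_ne_zero
  simp only [besselCoeff, ascPochhammer_succ_left, Polynomial.eval_mul, Polynomial.eval_X,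
    Polynomial.eval_comp, Polynomial.eval_add, Polynomial.eval_one, Nat.factorial_succ,
    Nat.cast_mul, Nat.cast_succ, pow_succ]
  field_simp

theorem norm_besselCoeff_le {κ : ℂ} (hκ0 : κ ≠ 0) (hκ : -1 / 2 ≤ κ.re) (c : ℂ) (k : ℕ) :
    ‖besselCoeff κ c k‖ ≤ (‖c‖ / (4 * ‖κ‖)) ^ k / k.factorial := by
  calc ‖besselCoeff κ c k‖
      = (‖c‖ / 4) ^ k / (‖(ascPochhammer ℂ k).eval κ‖ * k.factorial) := by
        simp [besselCoeff]
    _ ≤ (‖c‖ / 4) ^ k / (‖κ‖ ^ k * k.factorial) := by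
        gcongr
        exact norm_pow_le_norm_ascPochhammer_eval hκ k
    _ = (‖c‖ / (4 * ‖κ‖)) ^ k / k.factorial := by
        rw [← div_div, ← div_pow, div_div]

theorem norm_besselCoeff_mul_pow_le {κ : ℂ} (hκ0 : κ ≠ 0) (hκ : -1 / 2 ≤ κ.re) (c : ℂ) {R : ℝ}
    (hR : 0 ≤ R) (k : ℕ) :
    ‖besselCoeff κ c k‖ * R ^ k ≤ (‖c‖ / (4 * ‖κ‖) * R) ^ k / k.factorial := by
  rw [mul_pow, mul_div_right_comm]
  gcongr
  exact norm_besselCoeff_le hκ0 hκ c k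

theorem norm_besselPhi_le {κ : ℂ} (hκ0 : κ ≠ 0) (hκ : -1 / 2 ≤ κ.re) (c z : ℂ) :
    ‖besselPhi κ c z‖ ≤ Real.exp (‖c‖ / (4 * ‖κ‖) * ‖z‖) := by
  rw [Real.exp_eq_exp_ℝ]
  refine tsum_of_norm_bounded (NormedSpace.expSeries_div_hasSum_exp _) fun k => ?_
  rw [norm_mul, norm_pow]
  exact norm_besselCoeff_mul_pow_le hκ0 hκ c (norm_nonneg z) k

theorem besselPhi_zero (κ c : ℂ) : besselPhi κ c 0 = 1 := by
  rw [besselPhi, tsum_eq_single 0 fun k hk => by simp [hk]]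
  simp

theorem add_one_ne_zero_of_neg_half_le_re {κ : ℂ} (hκ : -1 / 2 ≤ κ.re) : κ + 1 ≠ 0 := by
  intro h
  have hre := congrArg re h
  simp only [add_re, one_re, zero_re] at hre
  linarith

theorem hasDerivAt_besselPhi {κ : ℂ} (hκ : -1 / 2 ≤ κ.re) (c z : ℂ) :
    HasDerivAt (besselPhi κ c) (-c / (4 * κ) * besselPhi (κ + 1) c z) z := by
  have hκ1 : κ + 1 ≠ 0 := add_one_ne_zero_of_neg_half_le_re hκ
  have hre : -1 / 2 ≤ (κ + 1).re := by
    rw [add_re, one_re]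
    linarith
  have hR : 0 ≤ ‖z‖ + 1 := by positivity
  have hsummable : Summable fun k => ‖besselCoeff (κ + 1) c k‖ * (‖z‖ + 1) ^ k :=
    (Real.summable_pow_div_factorial _).of_nonneg_of_le (fun k => by positivity)
      (norm_besselCoeff_mul_pow_le hκ1 hre c hR)
  have hcoeff (k : ℕ) : (k + 1) * ‖besselCoeff κ c (k + 1)‖ =
      ‖-c / (4 * κ)‖ * ‖besselCoeff (κ + 1) c k‖ := by
    rw [← norm_mul, ← succ_mul_besselCoeff_succ, norm_mul]
    norm_cast
  have hderiv : HasDerivAt (besselPhi κ c)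
      (∑' k : ℕ, (k + 1) * besselCoeff κ c (k + 1) * z ^ k) z :=
    hasDerivAt_tsum_mul_pow (a := besselCoeff κ c)
      (by simpa only [hcoeff, mul_assoc] using hsummable.mul_left ‖-c / (4 * κ)‖) (lt_add_one ‖z‖)
  simpa only [succ_mul_besselCoeff_succ, mul_assoc, tsum_mul_left, ← besselPhi_eq_tsum]
    using hderiv

theorem norm_deriv_besselPhi_le {κ : ℂ} (hκ0 : κ ≠ 0) (hκ : -1 / 2 ≤ κ.re) (c z : ℂ) :
    ‖deriv (besselPhi κ c) z‖ ≤
      ‖c‖ / (4 * ‖κ‖) * Real.exp (‖c‖ / (4 * ‖κ‖) * ‖z‖) := by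
  have hκ1 : κ + 1 ≠ 0 := add_one_ne_zero_of_neg_half_le_re hκ
  have hre : -1 / 2 ≤ (κ + 1).re := by
    rw [add_re, one_re]
    linarith
  have hmono : ‖κ‖ ≤ ‖κ + 1‖ := by simpa using norm_le_norm_add_natCast hκ 1
  calc ‖deriv (besselPhi κ c) z‖ = ‖c‖ / (4 * ‖κ‖) * ‖besselPhi (κ + 1) c z‖ := by
        simp [(hasDerivAt_besselPhi hκ c z).deriv]
    _ ≤ ‖c‖ / (4 * ‖κ‖) * Real.exp (‖c‖ / (4 * ‖κ + 1‖) * ‖z‖) := by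
        gcongr
        exact norm_besselPhi_le hκ1 hre c z
    _ ≤ ‖c‖ / (4 * ‖κ‖) * Real.exp (‖c‖ / (4 * ‖κ‖) * ‖z‖) := by gcongr

theorem norm_deriv_besselPhi_le_one_third {κ c : ℂ} (hκ0 : κ ≠ 0) (hκ : -1 / 2 ≤ κ.re)
    (hc : ‖c‖ ≤ ‖κ‖) {z : ℂ} (hz : z ∈ unitDisk) : ‖deriv (besselPhi κ c) z‖ ≤ 1 / 3 := by
  have hz1 : ‖z‖ ≤ 1 := (mem_ball_zero_iff.mp hz).le
  have hr : ‖c‖ / (4 * ‖κ‖) ≤ 1 / 4 := by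
    rw [div_le_iff₀ (by positivity)]
    linarith
  calc ‖deriv (besselPhi κ c) z‖
      ≤ ‖c‖ / (4 * ‖κ‖) * Real.exp (‖c‖ / (4 * ‖κ‖) * ‖z‖) :=
        norm_deriv_besselPhi_le hκ0 hκ c z
    _ ≤ 1 / 4 * Real.exp (1 / 4 * 1) := by gcongr
    _ ≤ 1 / 4 * (1 / (1 - 1 / 4 * 1)) := by
        gcongr
        exact Real.exp_bound_div_one_sub_of_interval (by norm_num) (by norm_num)
    _ = 1 / 3 := by norm_num

theorem bessel_exponential_starlike_family_general {κ c : ℂ} (hκ0 : κ ≠ 0)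
    (hκ : -1 / 2 ≤ κ.re) (hc : ‖c‖ ≤ ‖κ‖) : IsSe fun z => z * besselPhi κ c z :=
  isSe_mul_of_norm_deriv_le
    (fun z _ => (hasDerivAt_besselPhi hκ c z).differentiableAt.differentiableWithinAt)
    (besselPhi_zero κ c) (fun _ => norm_deriv_besselPhi_le_one_third hκ0 hκ hc)
    (by linarith [one_half_le_one_sub_exp_neg_one])

theorem bessel_exponential_starlike_family (n : ℕ) :
    IsSe (fun z => z * besselPhi (5 / 2 + (n : ℂ)) 1 z) ∧
      IsSe (fun z => z * besselPhi (5 / 2 + (n : ℂ)) (-1) z) := by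
  have hre : 5 / 2 ≤ (5 / 2 + (n : ℂ)).re := by simp
  have hnorm : 1 ≤ ‖5 / 2 + (n : ℂ)‖ := by linarith [re_le_norm (5 / 2 + (n : ℂ))]
  have hne : 5 / 2 + (n : ℂ) ≠ 0 := norm_pos_iff.mp (one_pos.trans_le hnorm)
  constructor <;>
    exact bessel_exponential_starlike_family_general hne (by linarith) (by simpa using hnorm)
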